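/- arXiv:2301.12625 — 3 statements merged into one kernel-verified Lean document; each statement's English description precedes it below -/
import Mathlib

section
/- Let A be a complete non-archimedean normed (possibly non-unital, non-associative) ring and let d : A → A be a contracting additive endomorphism. Let y ∈ A satisfy d(y·z) = y·(d z) for all z ∈ A (this is what the graded Leibniz rule gives for a closed element of even degree). If ‖y‖ < 1 and there exists α ∈ A with y − y·y = d α, then there exists β ∈ A with y = d β. (This is the chain-level form, i.e. the contrapositive, of the paper's key algebraic lemma: in a complete valued chain complex with product structure satisfying the Leibniz rule, any degree-0 chain-level representative of a nonzero idempotent in homology has non-positive valuation, i.e. norm at least 1.) -/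
/-!
If `f` is a contraction of a complete normed group, then `x - f x = a` has exactly one solution `x`,
the fixed point of `x ↦ a + f x`. Apply this to left multiplication by `y` and write
`α = β - y * β`. By the Leibniz rule `y - y * y = d α = d β - y * d β`, so `y` and `d β` solve the
same equation and are equal.
-/

open Function Set

open scoped NNReal

theorem contractingWith_const_vadd {M X : Type*} [EMetricSpace X] [VAdd M X] [IsIsometricVAdd M X]
    {K : ℝ≥0} {f : X → X} (hf : ContractingWith K f) (c : M) :
    ContractingWith K (fun x => c +ᵥ f x) :=
  ⟨hf.1, fun x y => (edist_vadd_left c (f x) (f y)).trans_le (hf.2 x y)⟩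

section NormedGroup

variable {E F : Type*} [NormedAddCommGroup E] [NormedAddCommGroup F] {K K' : ℝ≥0}

theorem contractingWith_of_norm_le_mul (f : E →+ E) (hK : K < 1) (hf : ∀ x, ‖f x‖ ≤ K * ‖x‖) :
    ContractingWith K f :=
  ⟨hK, AddMonoidHomClass.lipschitz_of_bound_nnnorm f K hf⟩

theorem injective_self_sub_of_contractingWith {f : E → E} (hf : ContractingWith K f) :
    Injective (fun x => x - f x) := by
  intro x y hxy
  have hx : IsFixedPt (fun z => (x - f x) + f z) x := sub_add_cancel x (f x)
  have hy : IsFixedPt (fun z => (x - f x) + f z) y := (sub_eq_iff_eq_add.mp hxy.symm).symm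
  exact (contractingWith_const_vadd hf (x - f x)).fixedPoint_unique' hx hy

theorem surjective_self_sub_of_contractingWith [CompleteSpace E] {f : E → E}
    (hf : ContractingWith K f) : Surjective (fun x => x - f x) := by
  intro a
  have ha := contractingWith_const_vadd hf a
  exact ⟨_, sub_eq_of_eq_add ha.fixedPoint_isFixedPt.symm⟩

theorem idempotent_representative_of_small_norm_is_exact_general [CompleteSpace E]
    {g : E → E} {f : F → F} (hg : ContractingWith K g) (hf : ContractingWith K' f)
    (d : E →+ F) (hd : Semiconj d g f) {y : F} (hy : y - f y ∈ range d) : y ∈ range d := by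
  have hsub : Semiconj d (fun x => x - g x) (fun x => x - f x) := fun x => by
    rw [map_sub, hd x]
  obtain ⟨z, hz, hzy⟩ := hsub.surjOn_range (surjective_self_sub_of_contractingWith hg) hy
  exact injective_self_sub_of_contractingWith hf hzy ▸ hz

end NormedGroup

/-- Chain-level form of the key algebraic lemma: in a complete non-archimedean
normed (possibly non-unital, non-associative) ring `A` with a contracting
additive endomorphism `d` such that `d (y·z) = y·(d z)` for all `z`,
if `‖y‖ < 1` and `y - y·y` is exact, then `y` is exact. -/
theorem idempotent_representative_of_small_norm_is_exact
    {A : Type*} [NormedAddCommGroup A] [CompleteSpace A]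
    (ultra : ∀ x y : A, ‖x + y‖ ≤ max ‖x‖ ‖y‖)
    (mul : A → A → A)
    (left_distrib : ∀ x y z : A, mul x (y + z) = mul x y + mul x z)
    (right_distrib : ∀ x y z : A, mul (x + y) z = mul x z + mul y z)
    (norm_mul_le : ∀ x y : A, ‖mul x y‖ ≤ ‖x‖ * ‖y‖)
    (d : A → A)
    (d_add : ∀ x y : A, d (x + y) = d x + d y)
    (d_contracting : ∀ x : A, ‖d x‖ ≤ ‖x‖)
    (y : A)
    (hLeibniz : ∀ z : A, d (mul y z) = mul y (d z))
    (hy : ‖y‖ < 1)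
    (α : A) (hα : y - mul y y = d α) :
    ∃ β : A, y = d β := by
  have hmul : ContractingWith ‖y‖₊ (mul y) :=
    contractingWith_of_norm_le_mul (.mk' (mul y) (left_distrib y)) hy (norm_mul_le y)
  obtain ⟨β, hβ⟩ := idempotent_representative_of_small_norm_is_exact_general hmul hmul
    (.mk' d d_add) hLeibniz ⟨α, hα.symm⟩
  exact ⟨β, hβ.symm⟩
end

section
/- Let A be a complete non-archimedean normed (possibly non-unital, non-associative) ring and let d : A → A be a contracting additive endomorphism. Let y ∈ A satisfy d(y·z) = y·(d z) for all z ∈ A. If ‖y‖ < 1 and x ∈ A is such that y·x − x = d α for some α ∈ A, then there exists β ∈ A with x = d β. (This is the chain-level form of the paper's finer algebraic lemma in the unit-eigenvalue case λ = 1: if b·a = a in the homology of a complete valued chain complex with product structure and b has a chain representative of positive valuation, then a = 0.) -/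
/-!
The equation `y·x - x = d α` says that `x` is a fixed point of `z ↦ y·z - d α`. Since `d` commutes
with multiplication by `y`, it intertwines `z ↦ y·z - α` with this map. Both maps are contractions:
by completeness the first has a fixed point `β`, and by uniqueness of the fixed point of the second
`d β = x`.
-/

open Function Set
open scoped NNReal

theorem contractingWith_of_norm_map_le {E : Type*} [NormedAddCommGroup E] {K : ℝ}
    (T : E →+ E) (hK : K < 1) (hT : ∀ z, ‖T z‖ ≤ K * ‖z‖) :
    ContractingWith K.toNNReal T :=
  ⟨Real.toNNReal_lt_one.mpr hK, AddMonoidHomClass.lipschitz_of_bound T K hT⟩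

theorem contractingWith_sub_const {E : Type*} [NormedAddCommGroup E] {K : ℝ≥0}
    {T : E → E} (hT : ContractingWith K T) (a : E) :
    ContractingWith K fun z => T z - a :=
  ⟨hT.1, fun u v => by simpa only [edist_sub_right] using hT.2 u v⟩

theorem mem_range_of_semiconj_of_isFixedPt {X Y : Type*} [MetricSpace X] [CompleteSpace X]
    [Nonempty X] [MetricSpace Y] {K L : ℝ≥0} {f : X → X} {g : Y → Y} {φ : X → Y}
    (hf : ContractingWith K f) (hg : ContractingWith L g) (hφ : Semiconj φ f g)
    {y : Y} (hy : IsFixedPt g y) : y ∈ range φ :=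
  ⟨hf.fixedPoint, hg.fixedPoint_unique' (hf.fixedPoint_isFixedPt.map hφ) hy⟩

theorem semiconj_sub_const {E F : Type*} [AddGroup E] [AddGroup F] {T : E → E} {S : F → F}
    {d : E →+ F} (hd : Semiconj d T S) (a : E) :
    Semiconj d (fun z => T z - a) (fun w => S w - d a) :=
  fun z => by rw [map_sub, hd z]

theorem eigen_representative_is_exact_of_small_norm_general {E F : Type*}
    [NormedAddCommGroup E] [CompleteSpace E] [NormedAddCommGroup F] {K L : ℝ≥0}
    {T : E → E} {S : F → F} {d : E →+ F} (hT : ContractingWith K T) (hS : ContractingWith L S)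
    (hd : Semiconj d T S) {x : F} {α : E} (hα : S x - x = d α) : x ∈ range d :=
  have hx : IsFixedPt (fun w => S w - d α) x := sub_eq_iff_comm.mp hα
  mem_range_of_semiconj_of_isFixedPt (contractingWith_sub_const hT α)
    (contractingWith_sub_const hS (d α)) (semiconj_sub_const hd α) hx

/-- Chain-level form of the finer algebraic lemma (unit-eigenvalue case `λ = 1`):
in a complete non-archimedean normed (possibly non-unital, non-associative) ring
`A` with a contracting additive endomorphism `d` such that `d (y·z) = y·(d z)`
for all `z`, if `‖y‖ < 1` and `y·x - x` is exact, then `x` is exact. -/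
theorem eigen_representative_is_exact_of_small_norm
    {A : Type*} [NormedAddCommGroup A] [CompleteSpace A]
    (ultra : ∀ x y : A, ‖x + y‖ ≤ max ‖x‖ ‖y‖)
    (mul : A → A → A)
    (left_distrib : ∀ x y z : A, mul x (y + z) = mul x y + mul x z)
    (right_distrib : ∀ x y z : A, mul (x + y) z = mul x z + mul y z)
    (norm_mul_le : ∀ x y : A, ‖mul x y‖ ≤ ‖x‖ * ‖y‖)
    (d : A → A)
    (d_add : ∀ x y : A, d (x + y) = d x + d y)
    (d_contracting : ∀ x : A, ‖d x‖ ≤ ‖x‖)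
    (y : A)
    (hLeibniz : ∀ z : A, d (mul y z) = mul y (d z))
    (hy : ‖y‖ < 1)
    (x α : A) (hα : mul y x - x = d α) :
    ∃ β : A, x = d β := by
  have hT := contractingWith_of_norm_map_le (.mk' (mul y) (left_distrib y)) hy (norm_mul_le y)
  obtain ⟨β, hβ⟩ := eigen_representative_is_exact_of_small_norm_general
    (d := .mk' d d_add) hT hT hLeibniz hα
  exact ⟨β, hβ.symm⟩
end

section
/- Let K be a normed field and let A be a complete non-archimedean normed (possibly non-unital, non-associative) ring that is simultaneously a normed K-vector space with ‖c • v‖ ≤ ‖c‖·‖v‖, whose scalar action is compatible with the multiplication in the sense that (c • x)·z = c • (x·z) and x·(c • z) = c • (x·z) for all c ∈ K and x, z ∈ A. Let d : A → A be a K-linear map with ‖d v‖ ≤ ‖v‖ for all v. Let y ∈ A satisfy d(y·z) = y·(d z) for all z ∈ A, let λ ∈ K be nonzero with ‖y‖ < ‖λ‖, and suppose x, α ∈ A satisfy y·x − λ • x = d α. Then there exists β ∈ A with x = d β. (This is the chain-level form of the paper's finer algebraic lemma: if classes a, b in the homology of a complete valued chain complex with product structure satisfy b·a = λ·a with λ an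 invertible scalar, and b has a chain representative of valuation larger than val(λ), then a = 0.) -/
/-!
Put `f z = y·z`. Solving `f z - λ • z = w` means finding a fixed point of `z ↦ λ⁻¹ • (f z - w)`,
which is a contraction because `‖y‖ < ‖λ‖`; so `z ↦ f z - λ • z` is a bijection of `A`. It commutes
with `d`, hence its inverse carries exact elements to exact elements.
-/

open Function
open scoped NNReal

theorem mem_range_of_semiconj {α β : Type*} {d : α → β} {f : α → α} {g : β → β}
    (h : Semiconj d f g) (hf : Surjective f) (hg : Injective g) {x : β}
    (hx : g x ∈ Set.range d) : x ∈ Set.range d := by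
  obtain ⟨a, ha⟩ := hx
  obtain ⟨b, rfl⟩ := hf a
  exact ⟨b, hg <| (h b).symm.trans ha⟩

theorem isFixedPt_inv_smul_sub_iff {K A : Type*} [DivisionRing K] [AddCommGroup A] [Module K A]
    {f : A → A} {r : K} (hr : r ≠ 0) {w z : A} :
    IsFixedPt (fun z => r⁻¹ • (f z - w)) z ↔ f z - r • z = w := by
  rw [IsFixedPt, inv_smul_eq_iff₀ hr, sub_eq_iff_eq_add, sub_eq_iff_eq_add, add_comm]

section Lipschitz

variable {K A : Type*} [NormedDivisionRing K] [NormedAddCommGroup A] [Module K A]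
  [IsBoundedSMul K A] {f : A → A} {c : ℝ≥0} {r : K}

theorem contractingWith_inv_smul_sub (hf : LipschitzWith c f) (hc : c < ‖r‖₊) (w : A) :
    ContractingWith (‖r‖₊⁻¹ * c) (fun z => r⁻¹ • (f z - w)) := by
  refine ⟨(inv_mul_lt_one₀ (pos_of_gt hc)).mpr hc, ?_⟩
  rw [← nnnorm_inv]
  exact (lipschitzWith_smul r⁻¹).comp <| by simpa using hf.sub (LipschitzWith.const w)

theorem injective_sub_smul_of_lipschitzWith (hf : LipschitzWith c f) (hc : c < ‖r‖₊) :
    Injective (fun z => f z - r • z) := by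
  have hr : r ≠ 0 := nnnorm_pos.mp (pos_of_gt hc)
  intro u v huv
  exact (contractingWith_inv_smul_sub hf hc (f v - r • v)).fixedPoint_unique'
    ((isFixedPt_inv_smul_sub_iff hr).mpr huv) ((isFixedPt_inv_smul_sub_iff hr).mpr rfl)

theorem surjective_sub_smul_of_lipschitzWith [CompleteSpace A] (hf : LipschitzWith c f)
    (hc : c < ‖r‖₊) : Surjective (fun z => f z - r • z) := by
  have hr : r ≠ 0 := nnnorm_pos.mp (pos_of_gt hc)
  intro w
  exact ⟨_, (isFixedPt_inv_smul_sub_iff hr).mp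
    (contractingWith_inv_smul_sub hf hc w).fixedPoint_isFixedPt⟩

end Lipschitz

theorem eigen_representative_is_exact_of_norm_lt_general {K A B : Type*} [NormedDivisionRing K]
    [NormedAddCommGroup A] [Module K A] [IsBoundedSMul K A]
    [NormedAddCommGroup B] [Module K B] [IsBoundedSMul K B] [CompleteSpace B]
    (d : B →ₗ[K] A) {f : B → B} {g : A → A} (hfg : Semiconj d f g)
    {c : ℝ≥0} (hf : LipschitzWith c f) (hg : LipschitzWith c g) {r : K} (hc : c < ‖r‖₊)
    {x : A} {α : B} (hα : g x - r • x = d α) : ∃ β : B, x = d β := by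
  have hd : Semiconj d (fun z => f z - r • z) (fun z => g z - r • z) := fun z => by
    simp only [map_sub, map_smul, hfg z]
  obtain ⟨β, hβ⟩ := mem_range_of_semiconj hd (surjective_sub_smul_of_lipschitzWith hf hc)
    (injective_sub_smul_of_lipschitzWith hg hc) ⟨α, hα.symm⟩
  exact ⟨β, hβ.symm⟩

/-- Chain-level form of the finer algebraic lemma: let `A` be a complete
non-archimedean normed (possibly non-unital, non-associative) ring which is
simultaneously a normed `K`-vector space over a normed field `K`, with the
scalar action compatible with the multiplication, and let `d : A → A` be a
`K`-linear norm non-increasing map with `d (y·z) = y·(d z)` for all `z`.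
If `λ ≠ 0`, `‖y‖ < ‖λ‖` and `y·x - λ • x` is exact, then `x` is exact. -/
theorem eigen_representative_is_exact_of_norm_lt
    {K : Type*} [NormedField K]
    {A : Type*} [NormedAddCommGroup A] [Module K A] [CompleteSpace A]
    (ultra : ∀ x y : A, ‖x + y‖ ≤ max ‖x‖ ‖y‖)
    (norm_smul_le : ∀ (c : K) (v : A), ‖c • v‖ ≤ ‖c‖ * ‖v‖)
    (mul : A → A → A)
    (left_distrib : ∀ x y z : A, mul x (y + z) = mul x y + mul x z)
    (right_distrib : ∀ x y z : A, mul (x + y) z = mul x z + mul y z)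
    (norm_mul_le : ∀ x y : A, ‖mul x y‖ ≤ ‖x‖ * ‖y‖)
    (smul_mul : ∀ (c : K) (x z : A), mul (c • x) z = c • mul x z)
    (mul_smul : ∀ (c : K) (x z : A), mul x (c • z) = c • mul x z)
    (d : A → A)
    (d_add : ∀ x y : A, d (x + y) = d x + d y)
    (d_smul : ∀ (c : K) (v : A), d (c • v) = c • d v)
    (d_contracting : ∀ v : A, ‖d v‖ ≤ ‖v‖)
    (y : A)
    (hLeibniz : ∀ z : A, d (mul y z) = mul y (d z))
    (lam : K) (hlam : lam ≠ 0)
    (hy : ‖y‖ < ‖lam‖)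
    (x α : A) (hα : mul y x - lam • x = d α) :
    ∃ β : A, x = d β := by
  have : IsBoundedSMul K A := .of_norm_smul_le norm_smul_le
  have hlip : LipschitzWith ‖y‖₊ (mul y) :=
    AddMonoidHomClass.lipschitz_of_bound_nnnorm (AddMonoidHom.mk' (mul y) (left_distrib y)) _
      (norm_mul_le y)
  exact eigen_representative_is_exact_of_norm_lt_general ⟨⟨d, d_add⟩, d_smul⟩ hLeibniz hlip hlip
    hy hα
end
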